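/- Let Λ be a left and right Noetherian ring, M a finitely generated left Λ-module, and n a non-negative integer. If grade M ≥ n and grade Ext^n_Λ(M, Λ) ≥ n+1, then grade M ≥ n+1. -/

import Mathlib

/-! Let `P• → M` be a resolution by finitely generated projectives, let `(-)* = Hom(-, Λ)`, and let
`B i` be the image of `P_{i-1}* → P_i*` (so `B 0 = 0`). Write `E = Ext^n(M, Λ)`, which is a
submodule of `P_n* / B n`; the claim is that `E = 0`, and it suffices to show that every map
`E → P_n* / B n` vanishes.

As `Ext^j(E, Λ) = 0` for `j ≤ n`, also `Ext^j(E, P_i*) = 0` for `j ≤ n`, because `P_i*` is a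
direct summand of a finite free right module (`HomExactAt.dual`). As `Ext^i(M, Λ) = 0` for `i < n`,
the sequences `0 → B i → P_i* → B (i + 1) → 0` are exact for `i < n`. Dimension shifting
(`HomExactAt.of_surjective`), starting from `B 0 = 0`, gives `Ext^j(E, B i) = 0` whenever
`j + i ≤ n + 1`. In particular `Ext^1(E, B n) = 0`, and one more shift along
`0 → B n → P_n* → P_n* / B n → 0` gives `Hom(E, P_n* / B n) = 0`.

Vanishing of Ext is used throughout in the form `HomExactAt`: exactness of `Hom(Q, N)` for a
projective resolution `Q` of the first argument (`subsingleton_extGrp_iff`). The Noetherian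
hypothesis on `Λ` provides the resolution of `M` by finitely generated projectives. -/

open CategoryTheory

noncomputable section

/-- The `n`-th Ext group of `M` and `N` over `Λ`, as an object of `ModuleCat ℤ`
(computed in the abelian category of `Λ`-modules). -/
def extGrp (Λ : Type) [Ring Λ] (n : ℕ) (M N : ModuleCat Λ) : ModuleCat ℤ :=
  ((_root_.Ext ℤ (ModuleCat Λ) n).obj (Opposite.op M)).obj N

section Dual

variable (Λ : Type) [Ring Λ]

/-- The canonical evaluation map from a left module to its double dual. -/
def evalL (M : Type) [AddCommGroup M] [Module Λ M] :
    M →ₗ[Λ] ((M →ₗ[Λ] Λ) →ₗ[Λᵐᵒᵖ] Λ) where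
  toFun m := { toFun := fun f => f m, map_add' := fun _ _ => rfl, map_smul' := fun _ _ => rfl }
  map_add' m m' := by ext f; simp
  map_smul' a m := by ext f; simp

/-- The canonical evaluation map from a right module to its double dual. -/
def evalR (N : Type) [AddCommGroup N] [Module Λᵐᵒᵖ N] :
    N →ₗ[Λᵐᵒᵖ] ((N →ₗ[Λᵐᵒᵖ] Λ) →ₗ[Λ] Λ) where
  toFun n := { toFun := fun f => f n, map_add' := fun _ _ => rfl, map_smul' := fun _ _ => rfl }
  map_add' n n' := by ext f; simp
  map_smul' a n := by ext f; simp

variable {Λ}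

/-- Dualizing a map of left modules (precomposition on `Hom(-,Λ)`). -/
def dualMap {P Q : Type} [AddCommGroup P] [Module Λ P] [AddCommGroup Q] [Module Λ Q]
    (g : P →ₗ[Λ] Q) : (Q →ₗ[Λ] Λ) →ₗ[Λᵐᵒᵖ] (P →ₗ[Λ] Λ) where
  toFun f := f.comp g
  map_add' _ _ := rfl
  map_smul' _ _ := rfl

/-- Dualizing a map of right modules (precomposition on `Hom(-,Λ)`). -/
def dualMapR {P Q : Type} [AddCommGroup P] [Module Λᵐᵒᵖ P] [AddCommGroup Q] [Module Λᵐᵒᵖ Q]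
    (g : P →ₗ[Λᵐᵒᵖ] Q) : (Q →ₗ[Λᵐᵒᵖ] Λ) →ₗ[Λ] (P →ₗ[Λᵐᵒᵖ] Λ) where
  toFun f := f.comp g
  map_add' _ _ := rfl
  map_smul' _ _ := rfl

end Dual

/-- A projective presentation `P₁ → P₀ → M → 0` by finitely generated projectives. -/
structure Presentation (Λ : Type) [Ring Λ] (M : Type) [AddCommGroup M] [Module Λ M] where
  P₁ : Type
  P₀ : Type
  [acg₁ : AddCommGroup P₁]
  [acg₀ : AddCommGroup P₀]
  [mod₁ : Module Λ P₁]
  [mod₀ : Module Λ P₀]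
  [fin₁ : Module.Finite Λ P₁]
  [fin₀ : Module.Finite Λ P₀]
  [proj₁ : Module.Projective Λ P₁]
  [proj₀ : Module.Projective Λ P₀]
  g : P₁ →ₗ[Λ] P₀
  π : P₀ →ₗ[Λ] M
  surj : Function.Surjective π
  exact : LinearMap.range g = LinearMap.ker π

attribute [instance] Presentation.acg₁ Presentation.acg₀ Presentation.mod₁ Presentation.mod₀
  Presentation.fin₁ Presentation.fin₀ Presentation.proj₁ Presentation.proj₀

/-- The Auslander transpose `Tr M = Coker(P₀* → P₁*)` attached to a projective
presentation; it is a right `Λ`-module. -/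
abbrev Presentation.Tr {Λ : Type} [Ring Λ] {M : Type} [AddCommGroup M] [Module Λ M]
    (pr : Presentation Λ M) : Type :=
  (pr.P₁ →ₗ[Λ] Λ) ⧸ LinearMap.range (dualMap pr.g)

/-- A resolution of a left module by finitely generated projective modules. -/
structure FGProjRes (Λ : Type) [Ring Λ] (M : Type) [AddCommGroup M] [Module Λ M] where
  P : ℕ → Type
  [acg : ∀ n, AddCommGroup (P n)]
  [mod : ∀ n, Module Λ (P n)]
  [fin : ∀ n, Module.Finite Λ (P n)]
  [proj : ∀ n, Module.Projective Λ (P n)]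
  d : ∀ n, P (n + 1) →ₗ[Λ] P n
  π : P 0 →ₗ[Λ] M
  surj : Function.Surjective π
  exact0 : LinearMap.range (d 0) = LinearMap.ker π
  exact : ∀ n, LinearMap.range (d (n + 1)) = LinearMap.ker (d n)

attribute [instance] FGProjRes.acg FGProjRes.mod FGProjRes.fin FGProjRes.proj

/-- Cocycles in degree `t` of the dualized complex `Hom(P•, Λ)`. -/
abbrev FGProjRes.extSub {Λ : Type} [Ring Λ] {M : Type} [AddCommGroup M] [Module Λ M]
    (R : FGProjRes Λ M) (t : ℕ) : Submodule Λᵐᵒᵖ (R.P t →ₗ[Λ] Λ) :=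
  LinearMap.ker (dualMap (R.d t))

/-- Coboundaries in degree `t` of the dualized complex `Hom(P•, Λ)`. -/
def FGProjRes.extBdry {Λ : Type} [Ring Λ] {M : Type} [AddCommGroup M] [Module Λ M]
    (R : FGProjRes Λ M) : (t : ℕ) → Submodule Λᵐᵒᵖ (R.extSub t)
  | 0 => ⊥
  | (t + 1) => (LinearMap.range (dualMap (R.d t))).comap (R.extSub (t + 1)).subtype

/-- `Ext^t_Λ(M, Λ)` computed from the resolution `R`, as a right `Λ`-module. -/
abbrev FGProjRes.extQ {Λ : Type} [Ring Λ] {M : Type} [AddCommGroup M] [Module Λ M]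
    (R : FGProjRes Λ M) (t : ℕ) : Type :=
  @HasQuotient.Quotient _ _ (@Submodule.hasQuotient Λᵐᵒᵖ (R.extSub t) _ _ _) (R.extBdry t)

/-- A resolution of a right module by finitely generated projective modules. -/
structure FGProjResR (Λ : Type) [Ring Λ] (N : Type) [AddCommGroup N] [Module Λᵐᵒᵖ N] where
  P : ℕ → Type
  [acg : ∀ n, AddCommGroup (P n)]
  [mod : ∀ n, Module Λᵐᵒᵖ (P n)]
  [fin : ∀ n, Module.Finite Λᵐᵒᵖ (P n)]
  [proj : ∀ n, Module.Projective Λᵐᵒᵖ (P n)]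
  d : ∀ n, P (n + 1) →ₗ[Λᵐᵒᵖ] P n
  π : P 0 →ₗ[Λᵐᵒᵖ] N
  surj : Function.Surjective π
  exact0 : LinearMap.range (d 0) = LinearMap.ker π
  exact : ∀ n, LinearMap.range (d (n + 1)) = LinearMap.ker (d n)

attribute [instance] FGProjResR.acg FGProjResR.mod FGProjResR.fin FGProjResR.proj

/-- Cocycles in degree `t` of the dualized complex `Hom(P•, Λ)` (right module case). -/
abbrev FGProjResR.extSub {Λ : Type} [Ring Λ] {N : Type} [AddCommGroup N] [Module Λᵐᵒᵖ N]
    (R : FGProjResR Λ N) (t : ℕ) : Submodule Λ (R.P t →ₗ[Λᵐᵒᵖ] Λ) :=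
  LinearMap.ker (dualMapR (R.d t))

/-- Coboundaries in degree `t` of the dualized complex (right module case). -/
def FGProjResR.extBdry {Λ : Type} [Ring Λ] {N : Type} [AddCommGroup N] [Module Λᵐᵒᵖ N]
    (R : FGProjResR Λ N) : (t : ℕ) → Submodule Λ (R.extSub t)
  | 0 => ⊥
  | (t + 1) => (LinearMap.range (dualMapR (R.d t))).comap (R.extSub (t + 1)).subtype

/-- `Ext^t_{Λᵒᵖ}(N, Λ)` computed from the resolution `R`, as a left `Λ`-module. -/
abbrev FGProjResR.extQ {Λ : Type} [Ring Λ] {N : Type} [AddCommGroup N] [Module Λᵐᵒᵖ N]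
    (R : FGProjResR Λ N) (t : ℕ) : Type :=
  @HasQuotient.Quotient _ _ (@Submodule.hasQuotient Λ (R.extSub t) _ _ _) (R.extBdry t)

/-- `pd_Λ M ≤ n`, via the standard characterization `Ext^{n+1}(M, -) = 0`. -/
def pdLE (Λ : Type) [Ring Λ] (M : ModuleCat Λ) (n : ℕ) : Prop :=
  ∀ N : ModuleCat Λ, Subsingleton (extGrp Λ (n + 1) M N)

/-- `id_Λ Λ ≤ n` (left self-injective dimension), via `Ext^{n+1}(-, Λ) = 0`. -/
def idLambdaLE (Λ : Type) [Ring Λ] (n : ℕ) : Prop :=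
  ∀ N : ModuleCat Λ, Subsingleton (extGrp Λ (n + 1) N (ModuleCat.of Λ Λ))

/-- `id_{Λᵒᵖ} Λ ≤ n` (right self-injective dimension). -/
def idLambdaOpLE (Λ : Type) [Ring Λ] (n : ℕ) : Prop :=
  ∀ N : ModuleCat Λᵐᵒᵖ, Subsingleton (extGrp Λᵐᵒᵖ (n + 1) N (ModuleCat.of Λᵐᵒᵖ Λ))

/-- `Λ` is `m`-Gorenstein, via Auslander's characterization:
`s.grade Ext^i_Λ(M, Λ) ≥ i` for every finitely generated left `Λ`-module `M`
and all `1 ≤ i ≤ m` ([FGR, Theorem 3.7]). -/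
def IsGorensteinLE (Λ : Type) [Ring Λ] (m : ℕ) : Prop :=
  ∀ (M : Type) [AddCommGroup M] [Module Λ M] [Module.Finite Λ M] (R : FGProjRes Λ M)
    (i : ℕ), 1 ≤ i → i ≤ m → ∀ X : Submodule Λᵐᵒᵖ (R.extQ i), ∀ j < i,
      Subsingleton (extGrp Λᵐᵒᵖ j (ModuleCat.of Λᵐᵒᵖ X) (ModuleCat.of Λᵐᵒᵖ Λ))

/-- `Λ` is left quasi `∞`-Gorenstein: `grade Ext^i_Λ(M, Λ) ≥ i` for every finitely
generated left `Λ`-module `M` and all `i ≥ 1`. -/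
def LeftQuasiInfGorenstein (Λ : Type) [Ring Λ] : Prop :=
  ∀ (M : Type) [AddCommGroup M] [Module Λ M] [Module.Finite Λ M] (R : FGProjRes Λ M)
    (i : ℕ), 1 ≤ i → ∀ j < i,
      Subsingleton (extGrp Λᵐᵒᵖ j (ModuleCat.of Λᵐᵒᵖ (R.extQ i)) (ModuleCat.of Λᵐᵒᵖ Λ))

/-- `M` is pseudo-null, i.e. `s.grade M ≥ 2`: every submodule of `M` has grade at
least `2` (equivalently `Hom_Λ(M, I'₀ ⊕ I'₁) = 0`, by [CSS, Lemma 1.1]). -/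
def IsPseudoNull (Λ : Type) [Ring Λ] (M : Type) [AddCommGroup M] [Module Λ M] : Prop :=
  ∀ X : Submodule Λ M, ∀ j < 2,
    Subsingleton (extGrp Λ j (ModuleCat.of Λ X) (ModuleCat.of Λ Λ))

/-- `M` is `k`-torsionfree: `Ext^j_{Λᵒᵖ}(Tr M, Λ) = 0` for all `1 ≤ j ≤ k`. -/
def KTorsionfree (Λ : Type) [Ring Λ] (k : ℕ) (M : Type) [AddCommGroup M] [Module Λ M] : Prop :=
  ∀ pr : Presentation Λ M, ∀ j, 1 ≤ j → j ≤ k →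
    Subsingleton (extGrp Λᵐᵒᵖ j (ModuleCat.of Λᵐᵒᵖ pr.Tr) (ModuleCat.of Λᵐᵒᵖ Λ))

/-! ### Ext and exactness of dualized resolutions -/

/-- `Hom(K, N)` is exact in degree `j`. For `j = 0` the truncated subtraction `j - 1 = 0` is
harmless: `K.d 0 0 = 0`, so the condition says that cocycles in degree `0` vanish. -/
def HomExactAt {A : Type} [Ring A] (K : ChainComplex (ModuleCat A) ℕ) (j : ℕ)
    (N : ModuleCat A) : Prop :=
  ∀ f : K.X j ⟶ N, K.d (j + 1) j ≫ f = 0 → ∃ g : K.X (j - 1) ⟶ N, f = K.d j (j - 1) ≫ g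

/-- `Ext^j(X, N)` vanishes iff `Hom(P, N)` is exact in degree `j`, for any projective resolution
`P` of `X`. -/
theorem subsingleton_extGrp_iff {A : Type} [Ring A] {X : ModuleCat A}
    (P : ProjectiveResolution X) (j : ℕ) (N : ModuleCat A) :
    Subsingleton (extGrp A j X N) ↔ HomExactAt P.complex j N := by
  have hp : (ComplexShape.up ℕ).prev j = j - 1 := by cases j <;> simp
  have hn : (ComplexShape.up ℕ).next j = j + 1 := by simp
  have h1 : Subsingleton (extGrp A j X N) ↔
      (P.complex.linearYonedaObj ℤ N).ExactAt j := by
    rw [HomologicalComplex.exactAt_iff_isZero_homology,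
      ← (P.isoExt (R := ℤ) j N).isZero_iff, ← ModuleCat.isZero_iff_subsingleton]
    rfl
  rw [h1, HomologicalComplex.exactAt_iff' _ _ _ _ hp hn, ShortComplex.moduleCat_exact_iff]
  constructor
  · intro h f hf
    obtain ⟨g, hg⟩ := h f hf
    exact ⟨g, hg.symm⟩
  · intro h f hf
    obtain ⟨g, hg⟩ := h f hf
    exact ⟨g, hg.symm⟩

namespace FGProjRes

variable {Λ : Type} [Ring Λ] {M : Type} [AddCommGroup M] [Module Λ M] (R : FGProjRes Λ M)

/-- The chain complex `⋯ → P₂ → P₁ → P₀` underlying `R`. -/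
def complex : ChainComplex (ModuleCat Λ) ℕ :=
  ChainComplex.of (fun n => ModuleCat.of Λ (R.P n)) (fun n => ModuleCat.ofHom (R.d n))
    (fun n => by
      ext x
      exact (R.exact n).le ⟨x, rfl⟩)

theorem complex_d (n : ℕ) : R.complex.d (n + 1) n = ModuleCat.ofHom (R.d n) :=
  ChainComplex.of_d (fun n => ModuleCat.of Λ (R.P n)) (fun n => ModuleCat.ofHom (R.d n)) n

theorem complex_exactAt_succ (n : ℕ) : R.complex.ExactAt (n + 1) := by
  rw [HomologicalComplex.exactAt_iff' _ (n + 1 + 1) (n + 1) n (by simp) (by simp),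
    ShortComplex.moduleCat_exact_iff]
  intro x hx
  change R.complex.d (n + 1) n x = 0 at hx
  rw [complex_d] at hx
  obtain ⟨y, hy⟩ := (R.exact n).ge hx
  refine ⟨y, ?_⟩
  change R.complex.d (n + 1 + 1) (n + 1) y = x
  rw [complex_d]
  exact hy

theorem complex_d_π : R.complex.d 1 0 ≫ (ModuleCat.ofHom R.π : R.complex.X 0 ⟶ _) = 0 := by
  rw [complex_d R 0]
  ext x
  exact R.exact0.le ⟨x, rfl⟩

/-- The augmentation `R.complex ⟶ M`, with `M` placed in degree `0`. -/
def augmentation : R.complex ⟶ (ChainComplex.single₀ _).obj (ModuleCat.of Λ M) :=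
  (ChainComplex.toSingle₀Equiv _ _).symm ⟨ModuleCat.ofHom R.π, R.complex_d_π⟩

theorem augmentation_f_zero : R.augmentation.f 0 = ModuleCat.ofHom R.π :=
  ChainComplex.toSingle₀Equiv_symm_apply_f_zero (C := R.complex) _ R.complex_d_π

/-- `R`, as a projective resolution in the abelian category of `Λ`-modules. -/
def toProjectiveResolution : ProjectiveResolution (ModuleCat.of Λ M) where
  complex := R.complex
  projective n := (IsProjective.iff_projective (R := Λ) (R.P n)).1 (R.proj n)
  π := R.augmentation
  quasiIso := ⟨fun n => by
    cases n
    · rw [ChainComplex.quasiIsoAt₀_iff,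
        ShortComplex.quasiIso_iff_of_zeros' _ (by rfl) (by rfl) (by rfl)]
      constructor
      · rw [ShortComplex.moduleCat_exact_iff]
        intro x hx
        change R.augmentation.f 0 x = 0 at hx
        rw [augmentation_f_zero] at hx
        obtain ⟨y, hy⟩ := R.exact0.ge hx
        refine ⟨y, ?_⟩
        change R.complex.d 1 0 y = x
        rw [complex_d R 0]
        exact hy
      · change Epi (R.augmentation.f 0)
        rw [augmentation_f_zero]
        exact (ModuleCat.epi_iff_surjective _).2 R.surj
    · rw [quasiIsoAt_iff_exactAt']
      · apply complex_exactAt_succ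
      · apply ChainComplex.exactAt_succ_single_obj⟩

/-- The coboundaries `im (P_{t-1}* → P_t*)`, as a submodule of all of `P_t*`; zero for `t = 0`. -/
def bdry : (t : ℕ) → Submodule Λᵐᵒᵖ (R.P t →ₗ[Λ] Λ)
  | 0 => ⊥
  | (t + 1) => LinearMap.range (dualMap (R.d t))

theorem extBdry_eq (t : ℕ) : R.extBdry t = (R.bdry t).comap (R.extSub t).subtype := by
  cases t with
  | zero => simp [extBdry, bdry]
  | succ t => rfl

theorem bdry_le (t : ℕ) : R.bdry t ≤ R.extSub t := by
  cases t with
  | zero => exact bot_le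
  | succ t =>
    rintro _ ⟨g, rfl⟩
    ext x
    have : R.d t (R.d (t + 1) x) = 0 := (R.exact t).le ⟨x, rfl⟩
    change g (R.d t (R.d (t + 1) x)) = 0
    rw [this, map_zero]

/-- `Ext^t(M, Λ) = 0` iff `P_{t-1}* → P_t* → P_{t+1}*` is exact. -/
theorem subsingleton_extGrp_iff_ker (t : ℕ) :
    Subsingleton (extGrp Λ t (ModuleCat.of Λ M) (ModuleCat.of Λ Λ)) ↔
      R.extSub t = R.bdry t := by
  rw [subsingleton_extGrp_iff R.toProjectiveResolution]
  change HomExactAt R.complex t _ ↔ _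
  have key : ∀ f : R.P t →ₗ[Λ] Λ, f ∈ R.bdry t ↔
      ∃ g : R.complex.X (t - 1) ⟶ ModuleCat.of Λ Λ,
        (ModuleCat.ofHom f : R.complex.X t ⟶ _) = R.complex.d t (t - 1) ≫ g := by
    intro f
    cases t with
    | zero =>
      have h0 : R.complex.d 0 (0 - 1) = 0 := R.complex.shape _ _ (by simp)
      rw [h0]
      constructor
      · rintro (rfl : f = 0)
        exact ⟨0, by simp; rfl⟩
      · rintro ⟨g, hg⟩
        rw [Limits.zero_comp] at hg
        change f = 0
        exact congrArg ModuleCat.Hom.hom hg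
    | succ t =>
      change _ ↔ ∃ g : R.complex.X t ⟶ _, _ = R.complex.d (t + 1) t ≫ g
      rw [complex_d]
      constructor
      · rintro ⟨g, rfl⟩
        exact ⟨ModuleCat.ofHom g, rfl⟩
      · rintro ⟨g, hg⟩
        exact ⟨g.hom, (congrArg ModuleCat.Hom.hom hg).symm⟩
  unfold HomExactAt
  rw [complex_d]
  constructor
  · intro h
    refine le_antisymm (fun f hf => (key f).2 (h (ModuleCat.ofHom f) ?_)) (R.bdry_le t)
    exact ModuleCat.hom_ext hf
  · intro h f hf
    exact (key f.hom).1 (h.le (congrArg ModuleCat.Hom.hom hf))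

end FGProjRes

/-! ### Embedding Ext into a cokernel -/

section Subquotient

variable {A V : Type} [Ring A] [AddCommGroup V] [Module A V]

/-- The canonical map from a subquotient `Z / B` of `V` to `V / B`. -/
def subquotientMap (Z B : Submodule A V) (B' : Submodule A Z) (h : B' = B.comap Z.subtype) :
    (Z ⧸ B') →ₗ[A] V ⧸ B :=
  B'.mapQ B Z.subtype h.le

theorem le_of_subquotientMap_eq_zero (Z B : Submodule A V) (B' : Submodule A Z)
    (h : B' = B.comap Z.subtype) (h0 : subquotientMap Z B B' h = 0) : Z ≤ B := fun f hf => by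
  have h1 : subquotientMap Z B B' h (Submodule.Quotient.mk ⟨f, hf⟩) = 0 := by rw [h0]; rfl
  exact (Submodule.Quotient.mk_eq_zero _).1 h1

end Subquotient

namespace FGProjRes

variable {Λ : Type} [Ring Λ] {M : Type} [AddCommGroup M] [Module Λ M] (R : FGProjRes Λ M)

/-- The embedding of `Ext^t(M, Λ) = ker (P_t* → P_{t+1}*) / im (P_{t-1}* → P_t*)` into
`P_t* / im (P_{t-1}* → P_t*)`. -/
def extQι (t : ℕ) : R.extQ t →ₗ[Λᵐᵒᵖ] (R.P t →ₗ[Λ] Λ) ⧸ R.bdry t :=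
  subquotientMap (R.extSub t) (R.bdry t) (R.extBdry t) (R.extBdry_eq t)

theorem extSub_eq_bdry_of_extQ (t : ℕ) (h : R.extQι t = 0) : R.extSub t = R.bdry t :=
  le_antisymm (le_of_subquotientMap_eq_zero _ _ _ (R.extBdry_eq t) h) (R.bdry_le t)

end FGProjRes

/-! ### Existence of finitely generated projective resolutions -/

section Existence

variable (Λ : Type) [Ring Λ]

/-- A finitely generated `Λ`-module, bundled with its structure. -/
structure FGMod where
  carrier : Type
  [acg : AddCommGroup carrier]
  [mod : Module Λ carrier]
  [fin : Module.Finite Λ carrier]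

attribute [instance] FGMod.acg FGMod.mod FGMod.fin

variable {Λ}

/-- The number of generators in a chosen finite generating family. -/
def FGMod.rank (X : FGMod Λ) : ℕ := (Module.Finite.exists_fin' Λ X.carrier).choose

/-- A surjection from a finite free module. -/
def FGMod.cover (X : FGMod Λ) : (Fin X.rank → Λ) →ₗ[Λ] X.carrier :=
  (Module.Finite.exists_fin' Λ X.carrier).choose_spec.choose

theorem FGMod.cover_surjective (X : FGMod Λ) : Function.Surjective X.cover :=
  (Module.Finite.exists_fin' Λ X.carrier).choose_spec.choose_spec

variable [IsNoetherianRing Λ]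

/-- The kernel of the chosen free cover; finitely generated since `Λ` is Noetherian. -/
def FGMod.syzygy (X : FGMod Λ) : FGMod Λ where
  carrier := LinearMap.ker X.cover

/-- The iterated syzygies of `X`. -/
def FGMod.syzygies (X : FGMod Λ) : ℕ → FGMod Λ
  | 0 => X
  | n + 1 => (X.syzygies n).syzygy

/-- The inclusion of the `(n + 1)`-st syzygy into the `n`-th free module. -/
def FGMod.incl (X : FGMod Λ) (n : ℕ) :
    (X.syzygies (n + 1)).carrier →ₗ[Λ] (Fin (X.syzygies n).rank → Λ) :=
  (LinearMap.ker (X.syzygies n).cover).subtype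

theorem FGMod.range_incl_comp (X : FGMod Λ) (n : ℕ) :
    LinearMap.range (X.incl n ∘ₗ (X.syzygies (n + 1)).cover) =
      LinearMap.ker (X.syzygies n).cover := by
  rw [LinearMap.range_comp, LinearMap.range_eq_top.2 (FGMod.cover_surjective _),
    Submodule.map_top]
  exact Submodule.range_subtype _

theorem exists_fgProjRes (M : Type) [AddCommGroup M] [Module Λ M] [Module.Finite Λ M] :
    Nonempty (FGProjRes Λ M) :=
  let X : FGMod Λ := ⟨M⟩
  ⟨{ P := fun n => Fin (X.syzygies n).rank → Λ
     d := fun n => X.incl n ∘ₗ (X.syzygies (n + 1)).cover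
     π := (X.syzygies 0).cover
     surj := FGMod.cover_surjective _
     exact0 := X.range_incl_comp 0
     exact := fun n => by
      rw [X.range_incl_comp (n + 1), LinearMap.ker_comp_of_ker_eq_bot]
      exact Submodule.ker_subtype _ }⟩

end Existence

/-! ### Dimension shifting in the second variable -/

section Shift

variable {A : Type} [Ring A] {K : ChainComplex (ModuleCat A) ℕ} [∀ n, Projective (K.X n)]

/-- If `0 → N₁ → N₂ → N₃ → 0` is exact, then `Ext^j(-, N₂) = 0` and `Ext^{j+1}(-, N₁) = 0` force
`Ext^j(-, N₃) = 0`, at the level of a complex of projectives. -/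
theorem HomExactAt.of_shortExact {j : ℕ} {S : ShortComplex (ModuleCat A)} (hS : S.ShortExact)
    (h₂ : HomExactAt K j S.X₂) (h₁ : HomExactAt K (j + 1) S.X₁) : HomExactAt K j S.X₃ := by
  intro f hf
  have := hS.epi_g
  have := hS.mono_f
  -- Lift the cocycle `f` to `g`; then `d ≫ g` is a cocycle with values in `S.X₁`, and subtracting
  -- a primitive `v` of it turns `g` into a cocycle.
  obtain ⟨g, rfl⟩ : ∃ g : K.X j ⟶ S.X₂, g ≫ S.g = f :=
    ⟨Projective.factorThru f S.g, Projective.factorThru_comp _ _⟩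
  obtain ⟨u, hu⟩ : ∃ u : K.X (j + 1) ⟶ S.X₁, u ≫ S.f = K.d (j + 1) j ≫ g :=
    ⟨hS.exact.lift (K.d (j + 1) j ≫ g) (by simpa using hf), hS.exact.lift_f _ _⟩
  obtain ⟨v, hv⟩ := h₁ u (by
    rw [← cancel_mono S.f, Category.assoc, hu]
    simp)
  change u = K.d (j + 1) j ≫ v at hv
  obtain ⟨w, hw⟩ := h₂ (g - (show K.X j ⟶ S.X₁ from v) ≫ S.f) (by
    rw [Preadditive.comp_sub, ← hu, hv, Category.assoc, sub_self])
  refine ⟨w ≫ S.g, ?_⟩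
  rw [← Category.assoc, ← hw, Preadditive.sub_comp, Category.assoc, S.zero]
  simp

theorem HomExactAt.of_surjective {j : ℕ} {L C : Type} [AddCommGroup L] [Module A L]
    [AddCommGroup C] [Module A C] (f : L →ₗ[A] C) (hf : Function.Surjective f)
    (B : Submodule A L) (hB : LinearMap.ker f = B) (h₂ : HomExactAt K j (ModuleCat.of A L))
    (h₁ : HomExactAt K (j + 1) (ModuleCat.of A B)) :
    HomExactAt K j (ModuleCat.of A C) := by
  subst hB
  exact HomExactAt.of_shortExact (LinearMap.shortExact_shortComplexKer hf) h₂ h₁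

end Shift

/-! ### Coefficients in the dual of a projective module -/

theorem exists_dualBasis (Λ : Type) [Ring Λ] (P : Type) [AddCommGroup P] [Module Λ P]
    [Module.Finite Λ P] [Module.Projective Λ P] :
    ∃ (k : ℕ) (x : Fin k → P) (φ : Fin k → P →ₗ[Λ] Λ), ∀ p, ∑ i, φ i p • x i = p := by
  obtain ⟨k, r, s, -, -, h⟩ := Module.Finite.exists_comp_eq_id_of_projective Λ P
  refine ⟨k, fun i => r (Pi.single i 1), fun i => LinearMap.proj i ∘ₗ s, fun p => ?_⟩
  conv_rhs => rw [← LinearMap.id_apply (R := Λ) p, ← h, LinearMap.comp_apply,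
    ← (Pi.basisFun Λ (Fin k)).sum_repr (s p)]
  simp

/-- Vanishing of `Ext^j(-, Λ)` passes to `Ext^j(-, P*)`: `P*` is a direct summand of a finite
free right module, and a dual basis of `P` writes down the splitting. -/
theorem HomExactAt.dual {Λ : Type} [Ring Λ] {K : ChainComplex (ModuleCat Λᵐᵒᵖ) ℕ} {j : ℕ}
    (h : HomExactAt K j (ModuleCat.of Λᵐᵒᵖ Λ)) (P : Type) [AddCommGroup P] [Module Λ P]
    [Module.Finite Λ P] [Module.Projective Λ P] :
    HomExactAt K j (ModuleCat.of Λᵐᵒᵖ (P →ₗ[Λ] Λ)) := by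
  obtain ⟨k, x, φ, hx⟩ := exists_dualBasis Λ P
  intro f hf
  let ev : P → (P →ₗ[Λ] Λ) →ₗ[Λᵐᵒᵖ] Λ := evalL Λ P
  have H : ∀ i, ∃ g : K.X (j - 1) ⟶ ModuleCat.of Λᵐᵒᵖ Λ,
      f ≫ ModuleCat.ofHom (ev (x i)) = K.d j (j - 1) ≫ g := fun i =>
    h _ (by rw [← Category.assoc, hf, Limits.zero_comp])
  choose g hg using H
  -- `e i` sends `a` to `p ↦ φ i p * a`, so that `ψ = ∑ i, e i (ψ (x i))` for every `ψ` in `P*`.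
  let e : Fin k → Λ →ₗ[Λᵐᵒᵖ] (P →ₗ[Λ] Λ) := fun i =>
    { toFun := fun a => (LinearMap.toSpanSingleton Λ Λ a).comp (φ i)
      map_add' := fun a b => by ext p; simp [mul_add]
      map_smul' := fun c a => by ext p; simp [mul_assoc] }
  let e' : Fin k → K.X (j - 1) →ₗ[Λᵐᵒᵖ] (P →ₗ[Λ] Λ) := fun i => (e i).comp (g i).hom
  refine ⟨ModuleCat.ofHom (∑ i, e' i), ?_⟩
  refine ModuleCat.hom_ext (LinearMap.ext fun q =>
    LinearMap.ext (σ := RingHom.id Λ) (M := P) (M₃ := Λ) fun p => ?_)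
  have hgq : ∀ i, (g i).hom (K.d j (j - 1) q) = (f.hom q : P →ₗ[Λ] Λ) (x i) := fun i =>
    (congrArg (fun u => u.hom q) (hg i)).symm
  change (f.hom q : P →ₗ[Λ] Λ) p =
    ((∑ i, e' i) (K.d j (j - 1) q) : P →ₗ[Λ] Λ) p
  rw [LinearMap.sum_apply, LinearMap.sum_apply]
  conv_lhs => rw [← hx p, map_sum]
  refine Finset.sum_congr rfl fun i _ => ?_
  rw [map_smul, ← hgq]
  rfl

/-- `Ext^0(E, N) = 0` means that there are no nonzero maps `E ⟶ N`. -/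
theorem HomExactAt.eq_zero {A : Type} [Ring A] {E N : ModuleCat A} (Q : ProjectiveResolution E)
    (h : HomExactAt Q.complex 0 N) (f : E ⟶ N) : f = 0 := by
  have h0 : Q.complex.d 0 (0 - 1) = 0 := Q.complex.shape _ _ (by simp)
  let p : Q.complex.X 0 ⟶ E := Q.π.f 0
  have hp : Epi p := inferInstanceAs (Epi (Q.π.f 0))
  have hdp : Q.complex.d 1 0 ≫ p = 0 := Q.complex_d_comp_π_f_zero
  obtain ⟨g, hg⟩ := h (p ≫ f) (by
    rw [← Category.assoc]
    exact (congrArg (· ≫ f) hdp).trans Limits.zero_comp)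
  rw [h0, Limits.zero_comp] at hg
  rw [← cancel_epi p, Limits.comp_zero, hg]

/-! ### The grade bound -/

/-- If `grade M ≥ n` and `grade Ext^n(M, Λ) ≥ n + 1`, then `grade M ≥ n + 1`. -/
theorem stmt_9 (Λ : Type) [Ring Λ] [IsNoetherianRing Λ] [IsNoetherianRing Λᵐᵒᵖ]
    (M : Type) [AddCommGroup M] [Module Λ M] [Module.Finite Λ M] (n : ℕ)
    (h1 : ∀ j < n, Subsingleton (extGrp Λ j (ModuleCat.of Λ M) (ModuleCat.of Λ Λ)))
    (h2 : ∀ R : FGProjRes Λ M, ∀ j < n + 1,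
      Subsingleton (extGrp Λᵐᵒᵖ j (ModuleCat.of Λᵐᵒᵖ (R.extQ n)) (ModuleCat.of Λᵐᵒᵖ Λ))) :
    ∀ j < n + 1, Subsingleton (extGrp Λ j (ModuleCat.of Λ M) (ModuleCat.of Λ Λ)) := by
  obtain ⟨R⟩ := exists_fgProjRes (Λ := Λ) M
  let Q := ProjectiveResolution.of (ModuleCat.of Λᵐᵒᵖ (R.extQ n))
  have hP : ∀ j < n + 1, ∀ t,
      HomExactAt Q.complex j (ModuleCat.of Λᵐᵒᵖ (R.P t →ₗ[Λ] Λ)) := fun j hj t =>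
    HomExactAt.dual ((subsingleton_extGrp_iff Q j _).1 (h2 R j hj)) (R.P t)
  -- For `i < n` the hypothesis on `M` makes `0 → bdry i → P_i* → bdry (i + 1) → 0` exact.
  have hB : ∀ i ≤ n, ∀ j, j + i ≤ n + 1 →
      HomExactAt Q.complex j (ModuleCat.of Λᵐᵒᵖ (R.bdry i)) := by
    intro i
    induction i with
    | zero =>
      intro _ j _ f _
      have : Subsingleton (R.bdry 0) :=
        inferInstanceAs (Subsingleton (⊥ : Submodule Λᵐᵒᵖ (R.P 0 →ₗ[Λ] Λ)))
      exact ⟨0, (ModuleCat.isZero_of_subsingleton (ModuleCat.of Λᵐᵒᵖ (R.bdry 0))).eq_of_tgt _ _⟩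
    | succ i ih =>
      intro hi j hj
      have hk : LinearMap.ker (dualMap (R.d i)).rangeRestrict = R.bdry i :=
        (LinearMap.ker_rangeRestrict _).trans
          ((R.subsingleton_extGrp_iff_ker i).1 (h1 i (by omega)))
      exact HomExactAt.of_surjective (dualMap (R.d i)).rangeRestrict
        (LinearMap.surjective_rangeRestrict _) (R.bdry i) hk (hP j (by omega) i)
        (ih (by omega) (j + 1) (by omega))
  -- `E` embeds into `C = P_n* / bdry n`, and there are no nonzero maps `E → C`.
  have hC : HomExactAt Q.complex 0 (ModuleCat.of Λᵐᵒᵖ ((R.P n →ₗ[Λ] Λ) ⧸ R.bdry n)) :=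
    HomExactAt.of_surjective (R.bdry n).mkQ (Submodule.mkQ_surjective _) (R.bdry n)
      (Submodule.ker_mkQ _) (hP 0 (by omega) n) (hB n le_rfl 1 (by omega))
  intro j hj
  rcases Nat.lt_succ_iff_lt_or_eq.1 hj with hj | rfl
  · exact h1 j hj
  · refine (R.subsingleton_extGrp_iff_ker j).2 (R.extSub_eq_bdry_of_extQ j ?_)
    exact congrArg ModuleCat.Hom.hom
      (HomExactAt.eq_zero Q hC (ModuleCat.ofHom (R.extQι j)))
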